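/- Let D be a d×d symmetric matrix with rational entries, let Γ = {k ∈ ℤ^d : Dk ∈ ℤ^d} = M(ℤ^d) for an invertible integer matrix M, and let n = |det M|. If {γ_1, …, γ_n} ⊂ ℤ^d is a complete set of representatives of ℤ^d modulo M(ℤ^d), then {M^t D γ_1, …, M^t D γ_n} is a set of integer vectors forming a complete set of representatives of ℤ^d modulo M^t(ℤ^d). -/

import Mathlib

/-!
Let `N = D M`, an integral matrix because the columns of `M` lie in `Γ`; by symmetry of `D`,
`Mᵀ D = Nᵀ` and `Mᵀ N = Nᵀ M`. As the image of `M` contains every `k` with `D k` integral, the map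
`k ↦ (M k, N k)` has torsion-free cokernel, so it splits: `X M + Y N = 1` for some integral `X` and
`Y`. Now `k = Mᵀ Xᵀ k + Nᵀ Yᵀ k` shows that the image of `Nᵀ` meets every coset of the image of
`Mᵀ`. Conversely, `(X, Y)` and `(-Nᵀ, Mᵀ)` are the block rows of an invertible matrix whose inverse
has first block column `(M, N)`, so `Nᵀ k = Mᵀ x` forces `k` into the image of `M`.
-/

open Matrix

section Splitting

variable {R V W : Type*} [CommRing R] [IsDedekindDomain R] [AddCommGroup V] [Module R V]
  [AddCommGroup W] [Module R W] [Module.Finite R W]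

theorem exists_leftInverse_of_isTorsionFree_quotient_range (f : V →ₗ[R] W)
    (hf : Function.Injective f) [Module.IsTorsionFree R (W ⧸ LinearMap.range f)] :
    ∃ g : W →ₗ[R] V, g ∘ₗ f = LinearMap.id := by
  have : Module.FinitePresentation R (W ⧸ LinearMap.range f) :=
    Module.finitePresentation_of_finite R _
  have : Module.Projective R (W ⧸ LinearMap.range f) :=
    Module.Flat.projective_of_finitePresentation
  have hsection := (LinearMap.range f).mkQ.exists_rightInverse_of_surjective (Submodule.range_mkQ _)
  exact ((f.exact_map_mkQ_range.split_tfae hf (Submodule.mkQ_surjective _)).out 0 1).mp hsection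

theorem exists_mul_add_mul_eq_one_of_isTorsionFree {l m n : Type*} [Fintype l] [Fintype m]
    [Fintype n] [DecidableEq n] (M : Matrix m n R) (N : Matrix l n R)
    (hM : Function.Injective M.mulVec) [Module.IsTorsionFree R
      (((m → R) × (l → R)) ⧸ LinearMap.range (M.mulVecLin.prod N.mulVecLin))] :
    ∃ (X : Matrix n m R) (Y : Matrix n l R), X * M + Y * N = 1 := by
  classical
  have hinj : Function.Injective (M.mulVecLin.prod N.mulVecLin) :=
    fun x y hxy => hM (congrArg Prod.fst hxy)
  obtain ⟨g, hg⟩ := exists_leftInverse_of_isTorsionFree_quotient_range _ hinj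
  refine ⟨LinearMap.toMatrix' (g ∘ₗ .inl R _ _), LinearMap.toMatrix' (g ∘ₗ .inr R _ _), ?_⟩
  refine Matrix.ext_of_mulVec_single fun i => ?_
  rw [add_mulVec, ← mulVec_mulVec, ← mulVec_mulVec, LinearMap.toMatrix'_mulVec,
    LinearMap.toMatrix'_mulVec, one_mulVec, LinearMap.comp_apply, LinearMap.comp_apply, ← map_add]
  simpa using LinearMap.congr_fun hg (Pi.single i 1)

end Splitting

section CoprimeSymmetricPair

theorem transpose_mul_add_transpose_mul_eq_one {l m n R : Type*} [Fintype l] [Fintype m]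
    [DecidableEq n] [CommRing R] {X : Matrix n m R} {Y : Matrix n l R} {M : Matrix m n R}
    {N : Matrix l n R} (h : X * M + Y * N = 1) : Mᵀ * Xᵀ + Nᵀ * Yᵀ = 1 := by
  simpa only [transpose_add, transpose_mul, transpose_one] using congrArg transpose h

variable {n R : Type*} [Fintype n] [CommRing R]

/-- A complete set of representatives, without repetition, of the cosets of the image of `A`. -/
structure IsCompleteResidueSystem {ι m : Type*} (A : Matrix m n R) (γ : ι → m → R) : Prop where
  incongruent : ∀ i j, i ≠ j → ¬ ∃ x : n → R, γ i - γ j = A *ᵥ x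
  complete : ∀ k : m → R, ∃ i, ∃ x : n → R, k - γ i = A *ᵥ x

variable [DecidableEq n]

/-- A coprime symmetric pair of square matrices, in the column version of Siegel's terminology:
`(M, N)` is the first block column of a symplectic matrix. -/
structure IsCoprimeSymmetricPair (M N : Matrix n n R) : Prop where
  symm : Mᵀ * N = Nᵀ * M
  coprime : ∃ X Y : Matrix n n R, X * M + Y * N = 1

namespace IsCoprimeSymmetricPair

variable {M N : Matrix n n R}

theorem exists_fromBlocks_mul_fromBlocks_eq_one (h : IsCoprimeSymmetricPair M N) :
    ∃ X Y B C : Matrix n n R, fromBlocks M B N C * fromBlocks X Y (-Nᵀ) Mᵀ = 1 := by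
  obtain ⟨X, Y, hXY⟩ := h.coprime
  -- The block column `(-Yᵀ, Xᵀ)` next to `(M, N)` would give a right inverse but for the upper
  -- right block `S` of the product, which a column operation clears.
  let S := Y * Xᵀ - X * Yᵀ
  let B := -Yᵀ - M * S
  let C := Xᵀ - N * S
  have hM : -Nᵀ * M + Mᵀ * N = 0 := by rw [h.symm, neg_mul, neg_add_cancel]
  have hB : X * B + Y * C = 0 := by
    calc X * B + Y * C = S - (X * M + Y * N) * S := by simp only [B, C, S]; noncomm_ring
      _ = 0 := by rw [hXY, one_mul, sub_self]
  have hC : -Nᵀ * B + Mᵀ * C = 1 := by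
    calc -Nᵀ * B + Mᵀ * C = Mᵀ * Xᵀ + Nᵀ * Yᵀ - (-Nᵀ * M + Mᵀ * N) * S := by
          simp only [B, C]; noncomm_ring
      _ = 1 := by rw [transpose_mul_add_transpose_mul_eq_one hXY, hM, zero_mul, sub_zero]
  refine ⟨X, Y, B, C, mul_eq_one_comm.mp ?_⟩
  rw [fromBlocks_multiply, hXY, hB, hM, hC, fromBlocks_one]

theorem exists_eq_mulVec_of_transpose_mulVec_eq (h : IsCoprimeSymmetricPair M N) {k x : n → R}
    (hk : Nᵀ *ᵥ k = Mᵀ *ᵥ x) : ∃ y, k = M *ᵥ y := by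
  obtain ⟨X, Y, B, C, hinv⟩ := h.exists_fromBlocks_mul_fromBlocks_eq_one
  rw [fromBlocks_multiply, ← fromBlocks_one, fromBlocks_inj] at hinv
  obtain ⟨hX, hY, -, -⟩ := hinv
  refine ⟨X *ᵥ k + Y *ᵥ x, ?_⟩
  calc k = (M * X + B * -Nᵀ) *ᵥ k + (M * Y + B * Mᵀ) *ᵥ x := by
        rw [hX, hY, one_mulVec, zero_mulVec, add_zero]
    _ = M *ᵥ (X *ᵥ k + Y *ᵥ x) + B *ᵥ (Mᵀ *ᵥ x - Nᵀ *ᵥ k) := by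
        simp only [add_mulVec, mulVec_add, mulVec_sub, mulVec_mulVec, mul_neg, neg_mulVec]; abel
    _ = M *ᵥ (X *ᵥ k + Y *ᵥ x) := by rw [hk, sub_self, mulVec_zero, add_zero]

theorem exists_sub_transpose_mulVec_eq (h : IsCoprimeSymmetricPair M N) (k : n → R) :
    ∃ y x, k - Nᵀ *ᵥ y = Mᵀ *ᵥ x := by
  obtain ⟨X, Y, hXY⟩ := h.coprime
  refine ⟨Yᵀ *ᵥ k, Xᵀ *ᵥ k, sub_eq_of_eq_add ?_⟩
  rw [mulVec_mulVec, mulVec_mulVec, ← add_mulVec, transpose_mul_add_transpose_mul_eq_one hXY,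
    one_mulVec]

theorem isCompleteResidueSystem (h : IsCoprimeSymmetricPair M N) {ι : Type*} {γ : ι → n → R}
    (hγ : IsCompleteResidueSystem M γ) : IsCompleteResidueSystem Mᵀ fun i => Nᵀ *ᵥ γ i where
  incongruent := by
    rintro i j hij ⟨x, hx⟩
    rw [← mulVec_sub] at hx
    exact hγ.incongruent i j hij (h.exists_eq_mulVec_of_transpose_mulVec_eq hx)
  complete k := by
    obtain ⟨y, x, hx⟩ := h.exists_sub_transpose_mulVec_eq k
    obtain ⟨i, z, hz⟩ := hγ.complete y
    refine ⟨i, x + N *ᵥ z, ?_⟩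
    calc k - Nᵀ *ᵥ γ i = k - Nᵀ *ᵥ y + Nᵀ *ᵥ (y - γ i) := by rw [mulVec_sub]; abel
      _ = Mᵀ *ᵥ x + (Nᵀ * M) *ᵥ z := by rw [hx, hz, mulVec_mulVec]
      _ = Mᵀ *ᵥ (x + N *ᵥ z) := by rw [← h.symm, mulVec_add, mulVec_mulVec]

end IsCoprimeSymmetricPair

end CoprimeSymmetricPair

section IntegralityLattice

variable {m n p R K : Type*} [CommRing R] [CommRing K] [Algebra R K]

theorem algebraMap_comp_smul (a : R) (v : n → R) :
    algebraMap R K ∘ (a • v) = a • (algebraMap R K ∘ v) :=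
  funext fun i => algebraMap.smul a (v i) K

variable [Fintype n]

variable (R) in
/-- The vectors over `R` that `D` maps to vectors over `R`, the `Γ` of the paper when `R = ℤ` and
`K = ℚ`. It is a bare set so that it unfolds to the set-builder form of `Γ`. -/
def integralityLattice (D : Matrix m n K) : Set (n → R) :=
  {k | ∀ i, ∃ z : R, (D *ᵥ fun j => algebraMap R K (k j)) i = algebraMap R K z}

variable {D : Matrix m n K} {M : Matrix n p R} {N : Matrix m p R}

theorem exists_map_eq_mul_map_of_col_mem (h : ∀ j, M.col j ∈ integralityLattice R D) :
    ∃ N : Matrix m p R, N.map (algebraMap R K) = D * M.map (algebraMap R K) := by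
  choose c hc using h
  exact ⟨of fun i j => c j i, ext fun i j => (hc j i).symm⟩

theorem algebraMap_comp_mulVec (A : Matrix m n R) (v : n → R) :
    algebraMap R K ∘ (A *ᵥ v) = A.map (algebraMap R K) *ᵥ (algebraMap R K ∘ v) :=
  funext fun i => RingHom.map_mulVec (algebraMap R K) A v i

theorem algebraMap_comp_mulVec_of_map_eq_mul [Fintype p]
    (hN : N.map (algebraMap R K) = D * M.map (algebraMap R K)) (x : p → R) :
    algebraMap R K ∘ (N *ᵥ x) = D *ᵥ (algebraMap R K ∘ (M *ᵥ x)) := by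
  rw [algebraMap_comp_mulVec, hN, algebraMap_comp_mulVec, mulVec_mulVec]

theorem isTorsionFree_quotient_range_of_integralityLattice_subset [Fintype p] [IsDomain R]
    [Nontrivial K] [Module.IsTorsionFree R K]
    (hN : N.map (algebraMap R K) = D * M.map (algebraMap R K))
    (hD : integralityLattice R D ⊆ {v | ∃ x : p → R, v = M *ᵥ x}) :
    Module.IsTorsionFree R
      (((n → R) × (m → R)) ⧸ LinearMap.range (M.mulVecLin.prod N.mulVecLin)) := by
  have hcoe : Function.Injective fun v : m → R => algebraMap R K ∘ v :=
    (FaithfulSMul.algebraMap_injective R K).comp_left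
  rw [Module.isTorsionFree_iff_smul_eq_zero]
  intro a q hq
  obtain ⟨⟨v, w⟩, rfl⟩ := Submodule.Quotient.mk_surjective _ q
  rw [← Submodule.Quotient.mk_smul, Submodule.Quotient.mk_eq_zero] at hq
  obtain ⟨x, hx⟩ := hq
  obtain ⟨hv, hw⟩ : M *ᵥ x = a • v ∧ N *ᵥ x = a • w := Prod.ext_iff.mp hx
  refine or_iff_not_imp_left.mpr fun ha => (Submodule.Quotient.mk_eq_zero _).mpr ?_
  have hsmul : a • (D *ᵥ (algebraMap R K ∘ v)) = a • (algebraMap R K ∘ w) := by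
    rw [← mulVec_smul, ← algebraMap_comp_smul, ← algebraMap_comp_smul, ← hv, ← hw,
      algebraMap_comp_mulVec_of_map_eq_mul hN]
  have hDv : D *ᵥ (algebraMap R K ∘ v) = algebraMap R K ∘ w := smul_right_injective _ ha hsmul
  obtain ⟨y, rfl⟩ := hD fun i => ⟨w i, congrFun hDv i⟩
  exact ⟨y, Prod.ext rfl (hcoe ((algebraMap_comp_mulVec_of_map_eq_mul hN y).trans hDv))⟩

end IntegralityLattice

theorem isCoprimeSymmetricPair_of_integralityLattice_subset {n R K : Type*} [Fintype n]
    [DecidableEq n] [CommRing R] [IsDedekindDomain R] [CommRing K] [Nontrivial K] [Algebra R K]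
    [Module.IsTorsionFree R K] {D : Matrix n n K} (hsym : Dᵀ = D) {M N : Matrix n n R}
    (hM : M.det ≠ 0) (hN : N.map (algebraMap R K) = D * M.map (algebraMap R K))
    (hD : integralityLattice R D ⊆ {v | ∃ x : n → R, v = M *ᵥ x}) :
    IsCoprimeSymmetricPair M N where
  symm := by
    refine Matrix.map_injective (FaithfulSMul.algebraMap_injective R K) ?_
    dsimp only
    rw [Matrix.map_mul, Matrix.map_mul, transpose_map, transpose_map, hN, transpose_mul, hsym,
      Matrix.mul_assoc]
  coprime := by
    have := isTorsionFree_quotient_range_of_integralityLattice_subset hN hD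
    exact exists_mul_add_mul_eq_one_of_isTorsionFree M N (mulVec_injective_of_det_ne_zero hM)

theorem stmt11_general {ι n R K : Type*} [Fintype n] [DecidableEq n] [CommRing R]
    [IsDedekindDomain R] [CommRing K] [Nontrivial K] [Algebra R K] [Module.IsTorsionFree R K]
    (D : Matrix n n K) (hsym : Dᵀ = D) (M : Matrix n n R) (hM : M.det ≠ 0)
    (hΓ : integralityLattice R D = {v | ∃ x : n → R, v = M *ᵥ x})
    (γ : ι → n → R) (hγ : IsCompleteResidueSystem M γ) :
    ∃ w : ι → n → R,
      (∀ i j, algebraMap R K (w i j) =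
        (Mᵀ.map (algebraMap R K) *ᵥ (D *ᵥ fun l => algebraMap R K (γ i l))) j) ∧
      IsCompleteResidueSystem Mᵀ w := by
  have hcol (j : n) : M.col j ∈ integralityLattice R D :=
    hΓ ▸ ⟨Pi.single j 1, (mulVec_single_one M j).symm⟩
  obtain ⟨N, hN⟩ := exists_map_eq_mul_map_of_col_mem hcol
  have hNt : Nᵀ.map (algebraMap R K) = Mᵀ.map (algebraMap R K) * D := by
    rw [transpose_map, hN, transpose_mul, hsym, transpose_map]
  have hpair := isCoprimeSymmetricPair_of_integralityLattice_subset hsym hM hN hΓ.subset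
  refine ⟨fun i => Nᵀ *ᵥ γ i, fun i j => ?_, hpair.isCompleteResidueSystem hγ⟩
  rw [RingHom.map_mulVec, hNt, mulVec_mulVec, Function.comp_def]

/-- If `D` is symmetric rational, `Γ = {k ∈ ℤ^d : Dk ∈ ℤ^d} = M(ℤ^d)` with `M` an
invertible integer matrix, `n = |det M|`, and `γ_1, …, γ_n` is a complete set of
representatives of `ℤ^d` mod `M(ℤ^d)`, then the vectors `MᵗDγ_i` are integer vectors
forming a complete set of representatives of `ℤ^d` mod `Mᵗ(ℤ^d)`. -/
theorem stmt11 (d : ℕ) (D : Matrix (Fin d) (Fin d) ℚ) (hsym : Dᵀ = D)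
    (M : Matrix (Fin d) (Fin d) ℤ) (hM : M.det ≠ 0)
    (hΓ : {k : Fin d → ℤ | ∀ i, ∃ z : ℤ, D.mulVec (fun j => (k j : ℚ)) i = (z : ℚ)}
        = {v | ∃ n : Fin d → ℤ, v = M.mulVec n})
    (γ : Fin M.det.natAbs → (Fin d → ℤ))
    (hdistinct : ∀ i j, i ≠ j → ¬ ∃ m : Fin d → ℤ, γ i - γ j = M.mulVec m)
    (hcomplete : ∀ k : Fin d → ℤ, ∃ i, ∃ m : Fin d → ℤ, k - γ i = M.mulVec m) :
    ∃ w : Fin M.det.natAbs → (Fin d → ℤ),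
      (∀ i j, ((w i j : ℚ)) =
        (Mᵀ.map (Int.cast : ℤ → ℚ)).mulVec (D.mulVec fun l => (γ i l : ℚ)) j) ∧
      (∀ i j, i ≠ j → ¬ ∃ m : Fin d → ℤ, w i - w j = Mᵀ.mulVec m) ∧
      (∀ k : Fin d → ℤ, ∃ i, ∃ m : Fin d → ℤ, k - w i = Mᵀ.mulVec m) := by
  obtain ⟨w, hw, hres⟩ := stmt11_general D hsym M hM hΓ γ ⟨hdistinct, hcomplete⟩
  exact ⟨w, hw, hres.incongruent, hres.complete⟩
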